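/- Let Q be a 4^n × 4^n complex matrix such that [H ⊗ I + I ⊗ H, Q] = 0 for every generator H ∈ {Z_j : 1 ≤ j ≤ n} ∪ {X_j X_{j+1} : 1 ≤ j ≤ n−1} (I the 2^n × 2^n identity). Then Q lies in the complex linear span of the 2(2n+1) operators {Q_κ^0, Q_κ^1 : 0 ≤ κ ≤ 2n}. Consequently, the commutant {Q : [H ⊗ I + I ⊗ H, Q] = 0 for all such H} is a complex vector space of dimension 4n + 2. -/

import Mathlib

open Matrix Complex
open scoped Kronecker

noncomputable section

abbrev QIdx (n : ℕ) := Fin n → Fin 2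
abbrev NMat (n : ℕ) := Matrix (QIdx n) (QIdx n) ℂ
abbrev NMat2 (n : ℕ) := Matrix (QIdx n × QIdx n) (QIdx n × QIdx n) ℂ

/-- The 2×2 Pauli X matrix. -/
def σX : Matrix (Fin 2) (Fin 2) ℂ := !![0, 1; 1, 0]
/-- The 2×2 Pauli Y matrix. -/
def σY : Matrix (Fin 2) (Fin 2) ℂ := !![0, -Complex.I; Complex.I, 0]
/-- The 2×2 Pauli Z matrix. -/
def σZ : Matrix (Fin 2) (Fin 2) ℂ := !![1, 0; 0, -1]

/-- Tensor (Kronecker) product of `n` one-qubit matrices, realized on index type `Fin n → Fin 2`. -/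
def tensor {n : ℕ} (M : Fin n → Matrix (Fin 2) (Fin 2) ℂ) : NMat n :=
  Matrix.of fun f g => ∏ i, M i (f i) (g i)

/-- The Jordan–Wigner Majorana operator `c_μ` (0-based index: `c_{2i} = Z^{⊗i} X I…`,
`c_{2i+1} = Z^{⊗i} Y I…`). -/
def majorana (n : ℕ) (μ : Fin (2 * n)) : NMat n :=
  tensor fun j =>
    if (j : ℕ) < (μ : ℕ) / 2 then σZ
    else if (j : ℕ) = (μ : ℕ) / 2 then (if (μ : ℕ) % 2 = 0 then σX else σY)
    else 1

/-- Ordered product `c^s` of the Majorana operators indexed by a subset `s`. -/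
def cProd (n : ℕ) (s : Finset (Fin (2 * n))) : NMat n :=
  ((s.sort (· ≤ ·)).map (majorana n)).prod

/-- The module `B_κ`: the complex span of products of `κ` distinct Majoranas. -/
def Bspace (n κ : ℕ) : Submodule ℂ (NMat n) :=
  Submodule.span ℂ {M | ∃ s : Finset (Fin (2 * n)), s.card = κ ∧ M = cProd n s}

/-- The Pauli string with `Z` on qubit `j` and identity elsewhere. -/
def pauliZ (n : ℕ) (j : Fin n) : NMat n := tensor fun k => if k = j then σZ else 1

/-- The Pauli string with `X` on qubits `j` and `j+1` and identity elsewhere. -/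
def pauliXX (n : ℕ) (j : Fin n) : NMat n :=
  tensor fun k => if (k : ℕ) = (j : ℕ) ∨ (k : ℕ) = (j : ℕ) + 1 then σX else 1

/-- The parity operator `P = Z^{⊗n}`. -/
def parity (n : ℕ) : NMat n := tensor fun _ => σZ


/-- Normalization constant `(d √C(2n,κ))⁻¹` with `d = 2^n`. -/
def Qnorm (n κ : ℕ) : ℂ := ((2 ^ n : ℂ) * ((Real.sqrt (Nat.choose (2 * n) κ) : ℝ) : ℂ))⁻¹

/-- The quadratic symmetry `Q_κ^0 = (d √C(2n,κ))⁻¹ Σ_{|s|=κ} c^s ⊗ c^s`. -/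
def Q0 (n κ : ℕ) : NMat2 n :=
  Qnorm n κ • ∑ s ∈ Finset.powersetCard κ (Finset.univ : Finset (Fin (2 * n))),
    (cProd n s) ⊗ₖ (cProd n s)

/-- The sum of the (1-based) elements of `s`, i.e. `π(s)`. -/
def piSum (n : ℕ) (s : Finset (Fin (2 * n))) : ℕ := ∑ μ ∈ s, ((μ : ℕ) + 1)

/-- The quadratic symmetry
`Q_κ^1 = (d √C(2n,κ))⁻¹ (−i)^n i^{κ mod 2} Σ_{|s|=κ} (−1)^{π(s)} c^s ⊗ c^{s̄}`. -/
def Q1 (n κ : ℕ) : NMat2 n :=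
  (Qnorm n κ * (-Complex.I) ^ n * Complex.I ^ (κ % 2)) •
    ∑ s ∈ Finset.powersetCard κ (Finset.univ : Finset (Fin (2 * n))),
      ((-1 : ℂ)) ^ (piSum n s) • ((cProd n s) ⊗ₖ (cProd n sᶜ))

/-- The matchgate circuit generators `{Z_j} ∪ {X_j X_{j+1}}`. -/
def matchgateGens (n : ℕ) : Set (NMat n) :=
  {M | ∃ j : Fin n, M = pauliZ n j} ∪
  {M | ∃ j : Fin n, (j : ℕ) + 1 < n ∧ M = pauliXX n j}

/-- The two-copy representation `H ⊗ I + I ⊗ H` of a generator `H`. -/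
def bigH (n : ℕ) (H : NMat n) : NMat2 n :=
  H ⊗ₖ (1 : NMat n) + (1 : NMat n) ⊗ₖ H

/-- The commutant of the tensor-square representation generated by the matchgate generators. -/
def quadCommutant (n : ℕ) : Submodule ℂ (NMat2 n) where
  carrier := {Q | ∀ H ∈ matchgateGens n, bigH n H * Q = Q * bigH n H}
  add_mem' := by
    intro a b ha hb H hH
    simp [Matrix.mul_add, Matrix.add_mul, ha H hH, hb H hH]
  zero_mem' := by
    intro H hH
    simp
  smul_mem' := by
    intro c a ha H hH
    simp [Matrix.mul_smul, Matrix.smul_mul, ha H hH]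

/-!
Up to a factor `i`, the generators `Z_j` and `X_j X_{j+1}` are the products `c_a c_b` of
neighbouring Majorana operators. The commutator with `c_a c_b` sends `c^s` to `± 2 c^{τ s}` with
`τ = (a b)` if `s` contains exactly one of `a` and `b`, and to `0` otherwise. The products `c^s`
form a basis, so `Q` is in the commutant if and only if its coefficients `q(s, t)` in the basis
`c^s ⊗ c^t` satisfy `ε(s) q(τ s, t) + ε(t) q(s, τ t) = 0` for all such `τ`, with signs
`ε ∈ {0, 1, -1}`.

If `q(s, t) ≠ 0`, this relation forces `s` to separate neighbours `a` and `b` exactly when `t`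
does, so that `t = s` or `t = s̄`. It also makes `q(s, s)` and `(-1)^{π(s)} q(s, s̄)` invariant
under all `τ`; since adjacent transpositions generate the symmetric group, which permutes the sets
of a given size transitively, these two functions of `s` depend only on `|s|`. They are thus linear
combinations of the coefficients of `Q_κ^0` and of `Q_κ^1`.
-/

section Exchange

open Equiv (swap)
open scoped Pointwise

variable {ι : Type*}

section DecidableEq

variable [DecidableEq ι] {a b : ι} {s : Finset ι}

lemma mem_swap_smul {x : ι} : x ∈ swap a b • s ↔ swap a b x ∈ s := by
  rw [← Finset.inv_smul_mem_iff, Equiv.swap_inv, Equiv.Perm.smul_def]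

lemma swap_smul_swap_smul (a b : ι) (s : Finset ι) : swap a b • swap a b • s = s := by
  rw [smul_smul, Equiv.swap_mul_self, one_smul]

lemma swap_smul_eq_iff {t : Finset ι} : swap a b • s = t ↔ s = swap a b • t := by
  rw [← swap_smul_swap_smul a b t, smul_left_cancel_iff, swap_smul_swap_smul]

lemma swap_smul_compl [Fintype ι] (a b : ι) (s : Finset ι) :
    swap a b • sᶜ = (swap a b • s)ᶜ := by
  ext x
  simp only [mem_swap_smul, Finset.mem_compl]

lemma swap_smul_eq_self (h : a ∈ s ↔ b ∈ s) : swap a b • s = s := by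
  ext x
  rw [mem_swap_smul, Equiv.swap_apply_def]
  split_ifs with hxa hxb
  · rw [hxa, h]
  · rw [hxb, h]
  · rfl

/-- The sign with which the commutator with `c_a c_b` exchanges `a` and `b` in a product `c^s` of
Majorana operators: `1` if `s` contains only `b`, `-1` if it contains only `a`, and `0` if it
contains both or neither. -/
def exchangeSign (a b : ι) (s : Finset ι) : ℤ :=
  (if b ∈ s then 1 else 0) - (if a ∈ s then 1 else 0)

lemma exchangeSign_swap_smul (a b : ι) (s : Finset ι) :
    exchangeSign a b (swap a b • s) = -exchangeSign a b s := by
  simp [exchangeSign, mem_swap_smul]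

lemma exchangeSign_compl [Fintype ι] (a b : ι) (s : Finset ι) :
    exchangeSign a b sᶜ = -exchangeSign a b s := by
  simp only [exchangeSign, Finset.mem_compl]
  split_ifs <;> rfl

lemma exchangeSign_eq_zero_iff : exchangeSign a b s = 0 ↔ (a ∈ s ↔ b ∈ s) := by
  simp only [exchangeSign]
  split_ifs <;> simp_all

lemma exchangeSign_smul_eq_zero_iff {M : Type*} [AddCommGroup M] {x : M} :
    exchangeSign a b s • x = 0 ↔ (a ∈ s ↔ b ∈ s) ∨ x = 0 := by
  simp only [exchangeSign]
  split_ifs <;> simp_all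

end DecidableEq

/-- A function `q` of two finite sets is exchange invariant if, for all neighbours `a ⋖ b`,
exchanging `a` and `b` in the first set and exchanging them in the second, each with its
`exchangeSign`, cancel. These are the coefficients of the operators `∑ q(s,t) c^s ⊗ c^t` that
commute with `c_a c_b ⊗ 1 + 1 ⊗ c_a c_b`. -/
def IsExchangeInvariant [LinearOrder ι] {M : Type*} [AddCommGroup M]
    (q : Finset ι → Finset ι → M) : Prop :=
  ∀ ⦃a b : ι⦄, a ⋖ b → ∀ s t : Finset ι,
    exchangeSign a b s • q (swap a b • s) t + exchangeSign a b t • q s (swap a b • t) = 0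

/-- `(-1)^π(s)`, where `π(s)` is the sum of the elements of `s` counted from `1`. -/
def alternatingSign {N : ℕ} (s : Finset (Fin N)) : ℤ := (-1) ^ ∑ i ∈ s, ((i : ℕ) + 1)

lemma alternatingSign_mul_self {N : ℕ} (s : Finset (Fin N)) :
    alternatingSign s * alternatingSign s = 1 := by
  rw [alternatingSign, ← mul_pow, neg_mul_neg, one_mul, one_pow]

lemma alternatingSign_swap_smul {N : ℕ} {a b : Fin N} (hab : a ⋖ b) (s : Finset (Fin N)) :
    alternatingSign (swap a b • s)
      = alternatingSign s * ((if a ∈ s then -1 else 1) * (if b ∈ s then -1 else 1)) := by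
  have hab' : (a : ℕ) + 1 = b := Nat.covBy_iff_add_one_eq.mp (Fin.covBy_iff.mp hab)
  have sign_swap (i : Fin N) : (-1 : ℤ) ^ ((swap a b i : ℕ) + 1)
      = (-1) ^ ((i : ℕ) + 1) * ((if i = a then -1 else 1) * (if i = b then -1 else 1)) := by
    rw [Equiv.swap_apply_def]
    split_ifs with hia hib hib
    · exact absurd (hia.symm.trans hib) hab.ne
    · rw [hia, ← hab', pow_succ _ ((a : ℕ) + 1), mul_one]
    · rw [hib, ← hab', pow_succ _ ((a : ℕ) + 1), one_mul, mul_neg_one, mul_neg_one, neg_neg]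
    · rw [mul_one, mul_one]
  simp only [alternatingSign, ← Finset.prod_pow_eq_pow_sum]
  rw [Finset.smul_finset_def, Finset.prod_image (MulAction.injective (swap a b)).injOn]
  simp only [Equiv.Perm.smul_def, sign_swap, Finset.prod_mul_distrib, Finset.prod_ite_eq']

lemma alternatingSign_swap_smul_of_not_iff {N : ℕ} {a b : Fin N} (hab : a ⋖ b)
    {s : Finset (Fin N)} (hs : ¬(a ∈ s ↔ b ∈ s)) :
    alternatingSign (swap a b • s) = -alternatingSign s := by
  rw [alternatingSign_swap_smul hab]
  split_ifs <;> simp_all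

lemma eq_of_card_eq_of_swap_invariant {N : ℕ} {α : Type*} {f : Finset (Fin N) → α}
    (hf : ∀ ⦃a b : Fin N⦄, a ⋖ b → ∀ s, f (swap a b • s) = f s) {s t : Finset (Fin N)}
    (hst : s.card = t.card) : f s = f t := by
  have perm_invariant (g : Equiv.Perm (Fin N)) : ∀ s, f (g • s) = f s := by
    obtain _ | m := N
    · exact fun s => congrArg f (Subsingleton.elim _ _)
    have hg : g ∈ Submonoid.closure (Set.range fun i : Fin m => swap i.castSucc i.succ) := by
      rw [Equiv.Perm.mclosure_swap_castSucc_succ]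
      exact Submonoid.mem_top g
    induction hg using Submonoid.closure_induction with
    | mem _ hx =>
      obtain ⟨i, rfl⟩ := hx
      exact hf (Fin.covBy_iff.mpr (by simp))
    | one => simp
    | mul x y _ _ hx hy => exact fun s => by rw [mul_smul, hx, hy]
  obtain ⟨g, hg⟩ := (Set.powersetCard.isPretransitive (α := Fin N) (n := t.card)).exists_smul_eq
    ⟨s, hst⟩ ⟨t, rfl⟩
  have hg' : g • s = t := congrArg Subtype.val hg
  rw [← hg', perm_invariant]

namespace IsExchangeInvariant

section LinearOrder

variable [LinearOrder ι] {M : Type*} [AddCommGroup M] {q : Finset ι → Finset ι → M}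

lemma mem_iff_mem_iff (hq : IsExchangeInvariant q) {s t : Finset ι} (hst : q s t ≠ 0) {a b : ι}
    (hab : a ⋖ b) : (a ∈ s ↔ b ∈ s) ↔ (a ∈ t ↔ b ∈ t) := by
  constructor <;> intro h <;> by_contra hne
  · have := hq hab s (swap a b • t)
    simp_all [exchangeSign_swap_smul, exchangeSign_smul_eq_zero_iff,
      exchangeSign_eq_zero_iff.mpr h]
  · have := hq hab (swap a b • s) t
    simp_all [exchangeSign_swap_smul, exchangeSign_smul_eq_zero_iff,
      exchangeSign_eq_zero_iff.mpr h]

lemma eq_or_eq_compl [Fintype ι] [SuccOrder ι] [IsSuccArchimedean ι]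
    (hq : IsExchangeInvariant q) {s t : Finset ι} (hst : q s t ≠ 0) : t = s ∨ t = sᶜ := by
  have agree (a b : ι) : (a ∈ s ↔ a ∈ t) ↔ (b ∈ s ↔ b ∈ t) := by
    refine Succ.rec_linear (p := fun a => a ∈ s ↔ a ∈ t) (fun a => ?_) a b
    by_cases ha : IsMax a
    · rw [ha.succ_eq]
    · have := hq.mem_iff_mem_iff hst (Order.covBy_succ_of_not_isMax ha)
      tauto
  by_cases h : ∀ a, a ∈ s ↔ a ∈ t
  · exact .inl (Finset.ext fun a => (h a).symm)
  · obtain ⟨b, hb⟩ := not_forall.mp h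
    refine .inr (Finset.ext fun a => ?_)
    have := agree a b
    rw [Finset.mem_compl]
    tauto

lemma apply_swap_smul_swap_smul (hq : IsExchangeInvariant q) {a b : ι} (hab : a ⋖ b)
    (s : Finset ι) : q (swap a b • s) (swap a b • s) = q s s := by
  by_cases hs : a ∈ s ↔ b ∈ s
  · rw [swap_smul_eq_self hs]
  · have h := hq hab s (swap a b • s)
    rw [exchangeSign_swap_smul, swap_smul_swap_smul, neg_smul, ← sub_eq_add_neg, ← smul_sub,
      exchangeSign_smul_eq_zero_iff] at h
    exact sub_eq_zero.mp (h.resolve_left hs)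

lemma apply_swap_smul_compl [Fintype ι] (hq : IsExchangeInvariant q) {a b : ι} (hab : a ⋖ b)
    {s : Finset ι} (hs : ¬(a ∈ s ↔ b ∈ s)) : q (swap a b • s) (swap a b • s)ᶜ = -q s sᶜ := by
  have h := hq hab s (swap a b • s)ᶜ
  rw [exchangeSign_compl, exchangeSign_swap_smul, neg_neg, swap_smul_compl, swap_smul_swap_smul,
    ← smul_add, exchangeSign_smul_eq_zero_iff] at h
  exact eq_neg_of_add_eq_zero_left (h.resolve_left hs)

lemma diagonal (f : ℕ → M) :
    IsExchangeInvariant fun s t : Finset ι => if t = s then f s.card else 0 := by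
  intro a b _ s t
  simp only [swap_smul_eq_iff, Finset.card_smul_finset]
  split_ifs with hts
  · rw [hts, exchangeSign_swap_smul, neg_smul, add_neg_cancel]
  · rw [smul_zero, smul_zero, add_zero]

end LinearOrder

section Fin

variable {N : ℕ} {M : Type*} [AddCommGroup M] {q : Finset (Fin N) → Finset (Fin N) → M}
  {s t : Finset (Fin N)}

lemma apply_self_eq_of_card_eq (hq : IsExchangeInvariant q) (hst : s.card = t.card) :
    q s s = q t t :=
  eq_of_card_eq_of_swap_invariant (f := fun s => q s s)
    (fun _ _ hab => hq.apply_swap_smul_swap_smul hab) hst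

lemma alternatingSign_smul_apply_compl_eq_of_card_eq (hq : IsExchangeInvariant q)
    (hst : s.card = t.card) : alternatingSign s • q s sᶜ = alternatingSign t • q t tᶜ := by
  refine eq_of_card_eq_of_swap_invariant (f := fun s => alternatingSign s • q s sᶜ)
    (fun a b hab s => ?_) hst
  by_cases hs : a ∈ s ↔ b ∈ s
  · rw [swap_smul_eq_self hs]
  · rw [alternatingSign_swap_smul_of_not_iff hab hs, hq.apply_swap_smul_compl hab hs, neg_smul_neg]

lemma antidiagonal (g : ℕ → M) :
    IsExchangeInvariant fun s t : Finset (Fin N) =>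
      if t = sᶜ then alternatingSign s • g s.card else 0 := by
  intro a b hab s t
  simp only [swap_smul_eq_iff, swap_smul_compl, Finset.card_smul_finset]
  split_ifs with hts
  · rw [hts, exchangeSign_compl, exchangeSign_swap_smul, neg_neg, ← smul_add, ← add_smul,
      exchangeSign_smul_eq_zero_iff, or_iff_not_imp_left]
    intro hs
    rw [alternatingSign_swap_smul_of_not_iff hab hs, neg_add_cancel, zero_smul]
  · rw [smul_zero, smul_zero, add_zero]

lemma exists_eq_diagonal_add_antidiagonal [NeZero N] (hq : IsExchangeInvariant q) :
    ∃ f g : ℕ → M, ∀ s t, q s t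
      = (if t = s then f s.card else 0) + (if t = sᶜ then alternatingSign s • g s.card else 0) := by
  obtain ⟨f, hf⟩ := (Function.factorsThrough_iff (f := Finset.card) fun s => q s s).mp
    fun _ _ => hq.apply_self_eq_of_card_eq
  obtain ⟨g, hg⟩ :=
    (Function.factorsThrough_iff (f := Finset.card) fun s => alternatingSign s • q s sᶜ).mp
      fun _ _ => hq.alternatingSign_smul_apply_compl_eq_of_card_eq
  refine ⟨f, g, fun s t => ?_⟩
  have hf_apply : q s s = f s.card := congrFun hf s
  have hg_apply : alternatingSign s • q s sᶜ = g s.card := congrFun hg s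
  by_cases hts : t = s
  · rw [if_pos hts, if_neg (hts ▸ ne_compl_self), hts, hf_apply, add_zero]
  by_cases htc : t = sᶜ
  · rw [if_neg hts, if_pos htc, htc, ← hg_apply, smul_smul, alternatingSign_mul_self, one_smul,
      zero_add]
  · rw [if_neg hts, if_neg htc, add_zero]
    by_contra hne
    exact (hq.eq_or_eq_compl hne).elim hts htc

end Fin

end IsExchangeInvariant

end Exchange

section OrderedProd

variable {ι A : Type*} [LinearOrder ι] [Monoid A] (c : ι → A)

lemma exists_eq_union_union_of_covBy {a b : ι} (hab : a ⋖ b) (s : Finset ι) :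
    ∃ lo m hi : Finset ι, (∀ i ∈ lo, i < a) ∧ m ⊆ {a, b} ∧ (∀ i ∈ hi, b < i) ∧
      s = lo ∪ (m ∪ hi) := by
  refine ⟨s.filter (· < a), s.filter fun i => i = a ∨ i = b, s.filter (b < ·),
    fun i hi => (Finset.mem_filter.mp hi).2, fun i hi => by simpa using (Finset.mem_filter.mp hi).2,
    fun i hi => (Finset.mem_filter.mp hi).2, ?_⟩
  ext i
  have cover : i < a ∨ (i = a ∨ i = b) ∨ b < i := by
    rcases lt_trichotomy i b with hib | rfl | hbi
    · exact (hab.le_of_lt hib).lt_or_eq.imp_right fun h => .inl (.inl h)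
    · exact .inr (.inl (.inr rfl))
    · exact .inr (.inr hbi)
  simp only [Finset.mem_union, Finset.mem_filter]
  tauto

/-- The product `c^s` of the elements `c i`, `i ∈ s`, in increasing order of `i`. -/
def orderedProd (s : Finset ι) : A := ((s.sort (· ≤ ·)).map c).prod

lemma orderedProd_empty : orderedProd c ∅ = 1 := by simp [orderedProd]

lemma orderedProd_singleton (i : ι) : orderedProd c {i} = c i := by simp [orderedProd]

lemma orderedProd_insert {i : ι} {s : Finset ι} (hi : ∀ j ∈ s, i < j) :
    orderedProd c (insert i s) = c i * orderedProd c s := by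
  rw [orderedProd, Finset.sort_insert (r := (· ≤ ·)) (fun j hj => (hi j hj).le)
    fun his => lt_irrefl i (hi i his), List.map_cons, List.prod_cons, orderedProd]

lemma orderedProd_union {s t : Finset ι} (hst : ∀ i ∈ s, ∀ j ∈ t, i < j) :
    orderedProd c (s ∪ t) = orderedProd c s * orderedProd c t := by
  induction s using Finset.induction_on_min with
  | empty => rw [Finset.empty_union, orderedProd_empty, one_mul]
  | insert i s hi ih =>
    have hi_union : ∀ j ∈ s ∪ t, i < j := fun j hj =>
      (Finset.mem_union.mp hj).elim (hi j) (hst i (Finset.mem_insert_self i s) j)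
    rw [Finset.insert_union, orderedProd_insert c hi_union, orderedProd_insert c hi,
      ih fun j hj => hst j (Finset.mem_insert_of_mem hj), mul_assoc]

lemma orderedProd_union_union {a b : ι} (hab : a < b) {lo m hi : Finset ι}
    (hlo : ∀ i ∈ lo, i < a) (hm : m ⊆ {a, b}) (hhi : ∀ i ∈ hi, b < i) :
    orderedProd c (lo ∪ (m ∪ hi)) = orderedProd c lo * (orderedProd c m * orderedProd c hi) := by
  have mem_pair {i : ι} (him : i ∈ m) : i = a ∨ i = b := by simpa using hm him
  rw [orderedProd_union, orderedProd_union]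
  · intro i him j hj
    rcases mem_pair him with rfl | rfl
    exacts [hab.trans (hhi j hj), hhi j hj]
  · intro i hil j hj
    rcases Finset.mem_union.mp hj with hjm | hjh
    · rcases mem_pair hjm with rfl | rfl
      exacts [hlo i hil, (hlo i hil).trans hab]
    · exact (hlo i hil).trans (hab.trans (hhi j hjh))

variable {c}

lemma commute_orderedProd {x : A} {s : Finset ι} (hx : ∀ i ∈ s, Commute x (c i)) :
    Commute x (orderedProd c s) :=
  Commute.list_prod_right _ _ (by simpa using hx)

end OrderedProd

section PassSign

variable {ι : Type*} [DecidableEq ι]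

/-- The sign `±1` with `c_i c^s = ± c^s c_i` for a family `c` of Majorana operators. -/
def passSign (i : ι) (s : Finset ι) : ℤ := (-1) ^ s.card * if i ∈ s then -1 else 1

lemma passSign_insert {i j : ι} {s : Finset ι} (hj : j ∉ s) :
    passSign i (insert j s) = (if j = i then 1 else -1) * passSign i s := by
  rw [passSign, passSign, Finset.card_insert_of_notMem hj, pow_succ]
  obtain rfl | hji := eq_or_ne j i
  · simp [hj]
  · simp [hji, hji.symm]

-- As `|ι|` is even, the product of all the signs is the factor `(-1)^{|s|}` they have in common.
lemma eq_of_passSign_eq [Fintype ι] (hι : Even (Fintype.card ι)) {s t : Finset ι}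
    (hst : ∀ i, passSign i s = passSign i t) : s = t := by
  have prod_passSign (s : Finset ι) : ∏ i, passSign i s = (-1) ^ s.card := by
    simp only [passSign, Finset.prod_mul_distrib, Finset.prod_const, Finset.card_univ,
      (hι.mul_left s.card).neg_one_pow, ← pow_mul, one_mul, Finset.prod_ite_mem,
      Finset.univ_inter]
  have parity_eq : (-1 : ℤ) ^ s.card = (-1) ^ t.card := by
    rw [← prod_passSign, ← prod_passSign]
    exact Finset.prod_congr rfl fun i _ => hst i
  ext i
  have hi : passSign i s = passSign i t := hst i
  rw [passSign, passSign, parity_eq, mul_right_inj' (pow_ne_zero _ (by decide))] at hi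
  split_ifs at hi <;> simp_all

end PassSign

/-- A family of Majorana operators: pairwise anticommuting elements with square `1`. -/
structure IsMajoranaFamily {ι A : Type*} [Ring A] (c : ι → A) : Prop where
  mul_self (i : ι) : c i * c i = 1
  anticomm ⦃i j : ι⦄ (hij : i ≠ j) : c i * c j = -(c j * c i)

namespace IsMajoranaFamily

variable {ι A : Type*} [Ring A] {c : ι → A}

lemma commute_mul (hc : IsMajoranaFamily c) {i j k : ι} (hik : i ≠ k) (hjk : j ≠ k) :
    Commute (c i * c j) (c k) := by
  rw [commute_iff_eq, mul_assoc, hc.anticomm hjk, mul_neg, ← mul_assoc, hc.anticomm hik, neg_mul,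
    neg_neg, mul_assoc]

variable [LinearOrder ι]

section Commutator

open Equiv (swap)
open scoped Pointwise

variable {a b : ι}

lemma lie_mul_orderedProd_of_subset_pair (hc : IsMajoranaFamily c) (hab : a < b) {m : Finset ι}
    (hm : m ⊆ {a, b}) :
    ⁅c a * c b, orderedProd c m⁆ = (2 * exchangeSign a b m) • orderedProd c (swap a b • m) := by
  have hba : c b * c a = -(c a * c b) := hc.anticomm hab.ne'
  have hm_cases : m = ∅ ∨ m = {a} ∨ m = {b} ∨ m = {a, b} := by
    rw [← Finset.coe_subset, Finset.coe_pair, Set.subset_pair_iff_eq] at hm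
    exact_mod_cast hm
  rcases hm_cases with rfl | rfl | rfl | rfl
  · simp [exchangeSign, orderedProd_empty, Ring.lie_def]
  · have left : c a * c b * c a = -c b := by
      rw [mul_assoc, hba, mul_neg, ← mul_assoc, hc.mul_self, one_mul]
    have right : c a * (c a * c b) = c b := by rw [← mul_assoc, hc.mul_self, one_mul]
    have sign : exchangeSign a b {a} = -1 := by simp [exchangeSign, hab.ne']
    have image : swap a b • ({a} : Finset ι) = {b} := by simp
    rw [sign, image, orderedProd_singleton, orderedProd_singleton, Ring.lie_def, left, right]
    module
  · have left : c a * c b * c b = c a := by rw [mul_assoc, hc.mul_self, mul_one]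
    have right : c b * (c a * c b) = -c a := by rw [← mul_assoc, hba, neg_mul, left]
    have sign : exchangeSign a b {b} = 1 := by simp [exchangeSign, hab.ne]
    have image : swap a b • ({b} : Finset ι) = {a} := by simp
    rw [sign, image, orderedProd_singleton, orderedProd_singleton, Ring.lie_def, left, right]
    module
  · have hprod : orderedProd c {a, b} = c a * c b := by
      rw [orderedProd_insert c (by simpa using hab), orderedProd_singleton]
    simp [exchangeSign, hprod, Ring.lie_def]

lemma lie_mul_orderedProd (hc : IsMajoranaFamily c) (hab : a ⋖ b) (s : Finset ι) :
    ⁅c a * c b, orderedProd c s⁆ = (2 * exchangeSign a b s) • orderedProd c (swap a b • s) := by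
  obtain ⟨lo, m, hi, hlo, hm, hhi, rfl⟩ := exists_eq_union_union_of_covBy hab s
  have a_notMem_lo : a ∉ lo := fun h => (hlo a h).false
  have b_notMem_lo : b ∉ lo := fun h => (hlo b h).not_gt hab.lt
  have a_notMem_hi : a ∉ hi := fun h => (hhi a h).not_gt hab.lt
  have b_notMem_hi : b ∉ hi := fun h => (hhi b h).false
  have commute_lo : Commute (c a * c b) (orderedProd c lo) := commute_orderedProd fun i h =>
    hc.commute_mul (hlo i h).ne' ((hlo i h).trans hab.lt).ne'
  have commute_hi : Commute (c a * c b) (orderedProd c hi) := commute_orderedProd fun i h =>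
    hc.commute_mul (hab.lt.trans (hhi i h)).ne (hhi i h).ne
  have lie_split : ⁅c a * c b, orderedProd c (lo ∪ (m ∪ hi))⁆
      = orderedProd c lo * (⁅c a * c b, orderedProd c m⁆ * orderedProd c hi) := by
    rw [orderedProd_union_union c hab.lt hlo hm hhi, Ring.lie_def, Ring.lie_def, sub_mul, mul_sub,
      ← mul_assoc (c a * c b), commute_lo.eq]
    simp only [mul_assoc, ← commute_hi.eq]
  have sign_split : exchangeSign a b (lo ∪ (m ∪ hi)) = exchangeSign a b m := by
    simp [exchangeSign, a_notMem_lo, b_notMem_lo, a_notMem_hi, b_notMem_hi]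
  have swap_split : swap a b • (lo ∪ (m ∪ hi)) = lo ∪ ((swap a b • m) ∪ hi) := by
    rw [Finset.smul_finset_union, Finset.smul_finset_union,
      swap_smul_eq_self (iff_of_false a_notMem_lo b_notMem_lo),
      swap_smul_eq_self (iff_of_false a_notMem_hi b_notMem_hi)]
  have swap_subset : swap a b • m ⊆ {a, b} :=
    (Finset.smul_finset_subset_smul_finset hm).trans_eq <| by
      simp [Finset.smul_finset_insert, Finset.pair_comm]
  rw [lie_split, hc.lie_mul_orderedProd_of_subset_pair hab.lt hm, sign_split, swap_split,
    orderedProd_union_union c hab.lt hlo swap_subset hhi, smul_mul_assoc, mul_smul_comm]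

end Commutator

section Conjugation

lemma mul_orderedProd (hc : IsMajoranaFamily c) (i : ι) (s : Finset ι) :
    c i * orderedProd c s = passSign i s • (orderedProd c s * c i) := by
  induction s using Finset.induction_on_min with
  | empty => simp [orderedProd_empty, passSign]
  | insert j s hj ih =>
    rw [orderedProd_insert c hj, passSign_insert fun hjs => lt_irrefl j (hj j hjs)]
    obtain rfl | hji := eq_or_ne j i
    · rw [if_pos rfl, one_mul, mul_assoc, ih, mul_smul_comm]
    · rw [if_neg hji, ← mul_assoc, hc.anticomm hji.symm, neg_mul, mul_assoc, ih, mul_smul_comm,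
        mul_assoc, neg_one_mul, neg_smul]

lemma isUnit_orderedProd (hc : IsMajoranaFamily c) (s : Finset ι) : IsUnit (orderedProd c s) :=
  List.prod_isUnit <| by
    simpa using fun i _ => ⟨⟨c i, c i, hc.mul_self i, hc.mul_self i⟩, rfl⟩

variable {K : Type*} [Field K] [NeZero (2 : K)] [Algebra K A]

-- The `c^s` are joint eigenvectors, with distinct characters, of the conjugations `x ↦ c_i x c_i`.
lemma linearIndependent_orderedProd [Nontrivial A] [Fintype ι] (hc : IsMajoranaFamily c)
    (hι : Even (Fintype.card ι)) : LinearIndependent K (orderedProd c) := by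
  let conj (i : ι) : Module.End K A := LinearMap.mulLeftRight K (c i, c i)
  have conj_apply (i : ι) (x : A) : conj i x = c i * x * c i :=
    LinearMap.mulLeftRight_apply (R := K) (c i) (c i) x
  have conj_commute (i j : ι) : Commute (conj i) (conj j) := by
    obtain rfl | hij := eq_or_ne i j
    · exact Commute.refl _
    refine LinearMap.ext fun x => ?_
    calc conj i (conj j x) = c i * c j * x * (c j * c i) := by simp only [conj_apply, mul_assoc]
      _ = c j * c i * x * (c i * c j) := by rw [hc.anticomm hij]; simp only [neg_mul, mul_neg]
      _ = conj j (conj i x) := by simp only [conj_apply, mul_assoc]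
  have conj_orderedProd (i : ι) (s : Finset ι) :
      conj i (orderedProd c s) = (passSign i s : K) • orderedProd c s := by
    rw [conj_apply, hc.mul_orderedProd, smul_mul_assoc, mul_assoc, hc.mul_self, mul_one,
      Int.cast_smul_eq_zsmul]
  have ringChar_ne_two : ringChar K ≠ 2 := fun h =>
    two_ne_zero (α := K) (by exact_mod_cast h ▸ ringChar.Nat.cast_ringChar (R := K))
  have character_injective :
      Function.Injective fun (s : Finset ι) (i : ι) => (passSign i s : K) := by
    refine fun s t hst => eq_of_passSign_eq hι fun i => ?_
    have mem_signs (s : Finset ι) : passSign i s ∈ ({0, 1, -1} : Set ℤ) := by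
      rcases neg_one_pow_eq_or ℤ s.card with h | h <;> by_cases his : i ∈ s <;>
        simp [passSign, h, his]
    exact Int.cast_injOn_of_ringChar_ne_two ringChar_ne_two (mem_signs s) (mem_signs t)
      (congrFun hst i)
  have independent := Module.End.independent_iInf_maxGenEigenspace_of_forall_mapsTo conj
    fun i j => Module.End.mapsTo_maxGenEigenspace_of_comm (conj_commute j i)
  refine (independent.comp character_injective).linearIndependent _ (fun s => ?_)
    fun s => (hc.isUnit_orderedProd s).ne_zero
  refine (Submodule.mem_iInf _).mpr fun i => ?_
  exact ((conj i).genEigenspace _).mono le_top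
    (Module.End.mem_eigenspace_iff.mpr (conj_orderedProd i s))

end Conjugation

end IsMajoranaFamily

section JordanWigner

variable {n : ℕ}

lemma tensor_mul (M N : Fin n → Matrix (Fin 2) (Fin 2) ℂ) :
    tensor M * tensor N = tensor fun i => M i * N i := by
  ext f g
  simp only [tensor, Matrix.mul_apply, Matrix.of_apply, Finset.prod_univ_sum,
    Fintype.piFinset_univ, Finset.prod_mul_distrib]

lemma tensor_one : tensor (fun _ : Fin n => (1 : Matrix (Fin 2) (Fin 2) ℂ)) = 1 := by
  ext f g
  simp only [tensor, Matrix.of_apply, Matrix.one_apply, Fintype.prod_ite_zero, funext_iff,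
    Finset.prod_const_one]

lemma tensor_eq_smul {M N : Fin n → Matrix (Fin 2) (Fin 2) ℂ} {z : ℂ} (j : Fin n)
    (hj : M j = z • N j) (hne : ∀ k ≠ j, M k = N k) : tensor M = z • tensor N := by
  ext f g
  simp only [tensor, Matrix.smul_apply, Matrix.of_apply, smul_eq_mul]
  rw [← Finset.mul_prod_erase _ _ (Finset.mem_univ j),
    ← Finset.mul_prod_erase _ (fun i => N i (f i) (g i)) (Finset.mem_univ j), hj,
    Matrix.smul_apply, smul_eq_mul, mul_assoc]
  congr 2
  exact Finset.prod_congr rfl fun k hk => by rw [hne k (Finset.ne_of_mem_erase hk)]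

lemma σX_mul_self : σX * σX = 1 := by simp [σX, Matrix.one_fin_two]

lemma σY_mul_self : σY * σY = 1 := by simp [σY, Matrix.one_fin_two]

lemma σZ_mul_self : σZ * σZ = 1 := by simp [σZ, Matrix.one_fin_two]

lemma σX_mul_σY : σX * σY = I • σZ := by simp [σX, σY, σZ]

lemma σY_mul_σZ : σY * σZ = I • σX := by simp [σX, σY, σZ]

lemma σY_mul_σX_eq_neg : σY * σX = -(σX * σY) := by simp [σX, σY]

lemma σX_mul_σZ_eq_neg : σX * σZ = -(σZ * σX) := by simp [σX, σZ]

lemma σY_mul_σZ_eq_neg : σY * σZ = -(σZ * σY) := by simp [σY, σZ]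

lemma majorana_mul_self (μ : Fin (2 * n)) : majorana n μ * majorana n μ = 1 := by
  rw [majorana, tensor_mul, ← tensor_one]
  congr 1
  funext j
  split_ifs
  exacts [σZ_mul_self, σX_mul_self, σY_mul_self, one_mul 1]

-- The two operators anticommute exactly on the last qubit where the first one is not the identity.
lemma majorana_mul_majorana_of_lt {μ ν : Fin (2 * n)} (hμν : μ < ν) :
    majorana n μ * majorana n ν = -(majorana n ν * majorana n μ) := by
  rw [Fin.lt_def] at hμν
  rw [majorana, majorana, tensor_mul, tensor_mul, ← neg_one_smul ℂ]
  refine tensor_eq_smul ⟨μ / 2, by omega⟩ ?_ fun k hk => ?_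
  · dsimp only
    split_ifs <;> first | omega | simp [σX_mul_σZ_eq_neg, σY_mul_σZ_eq_neg, σY_mul_σX_eq_neg]
  · rw [ne_eq, Fin.ext_iff] at hk
    split_ifs <;> first | omega | simp

lemma isMajoranaFamily_majorana (n : ℕ) : IsMajoranaFamily (majorana n) where
  mul_self := majorana_mul_self
  anticomm μ ν hμν := by
    obtain hlt | hgt := hμν.lt_or_gt
    · exact majorana_mul_majorana_of_lt hlt
    · rw [majorana_mul_majorana_of_lt hgt, neg_neg]

lemma majorana_mul_majorana_eq_pauliZ {a b : Fin (2 * n)} (j : Fin n) (ha : (a : ℕ) = 2 * j)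
    (hb : (b : ℕ) = 2 * j + 1) : majorana n a * majorana n b = I • pauliZ n j := by
  rw [majorana, majorana, tensor_mul, pauliZ]
  refine tensor_eq_smul j ?_ fun k hk => ?_
  · split_ifs <;> first | omega | simp [σX_mul_σY]
  · rw [ne_eq, Fin.ext_iff] at hk
    split_ifs <;> first | omega | simp [σZ_mul_self]

lemma majorana_mul_majorana_eq_pauliXX {a b : Fin (2 * n)} (j : Fin n)
    (ha : (a : ℕ) = 2 * j + 1) (hb : (b : ℕ) = 2 * j + 2) :
    majorana n a * majorana n b = I • pauliXX n j := by
  rw [majorana, majorana, tensor_mul, pauliXX]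
  refine tensor_eq_smul j ?_ fun k hk => ?_
  · split_ifs <;> first | omega | simp [σY_mul_σZ]
  · rw [ne_eq, Fin.ext_iff] at hk
    split_ifs <;> first | omega | simp [σZ_mul_self]

end JordanWigner

section Coefficients

open Module

lemma cProd_eq_orderedProd (n : ℕ) : cProd n = orderedProd (majorana n) := rfl

lemma linearIndependent_cProd (n : ℕ) : LinearIndependent ℂ (cProd n) :=
  cProd_eq_orderedProd n ▸ (isMajoranaFamily_majorana n).linearIndependent_orderedProd (by simp)

/-- The products `c^s` of Majorana operators, as a basis of the operators on `n` qubits. -/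
def cProdBasis (n : ℕ) : Basis (Finset (Fin (2 * n))) ℂ (NMat n) :=
  basisOfLinearIndependentOfCardEqFinrank (linearIndependent_cProd n)
    (by simp [Module.finrank_matrix, two_mul, pow_add])

/-- The operators `c^s ⊗ c^t`, as a basis of the operators on two copies of `n` qubits. -/
def cProdKroneckerBasis (n : ℕ) :
    Basis (Finset (Fin (2 * n)) × Finset (Fin (2 * n))) ℂ (NMat2 n) :=
  ((cProdBasis n).tensorProduct (cProdBasis n)).map (kroneckerLinearEquiv _ _ _ _ ℂ)

lemma cProdKroneckerBasis_apply (n : ℕ) (s t : Finset (Fin (2 * n))) :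
    cProdKroneckerBasis n (s, t) = cProd n s ⊗ₖ cProd n t := by
  simp [cProdKroneckerBasis, cProdBasis, Basis.tensorProduct_apply]

/-- The coefficient of `c^s ⊗ c^t` in an operator on two copies of `n` qubits. -/
def cProdCoeff (n : ℕ) (s t : Finset (Fin (2 * n))) : NMat2 n →ₗ[ℂ] ℂ :=
  (cProdKroneckerBasis n).coord (s, t)

lemma cProdCoeff_kronecker (n : ℕ) (s t u v : Finset (Fin (2 * n))) :
    cProdCoeff n s t (cProd n u ⊗ₖ cProd n v) = if s = u ∧ t = v then 1 else 0 := by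
  rw [cProdCoeff, ← cProdKroneckerBasis_apply, Basis.coord_apply, Basis.repr_self,
    Finsupp.single_apply]
  simp only [Prod.mk.injEq, eq_comm]

lemma ext_cProdCoeff {n : ℕ} {Q R : NMat2 n} (h : ∀ s t, cProdCoeff n s t Q = cProdCoeff n s t R) :
    Q = R :=
  (cProdKroneckerBasis n).ext_elem fun p => h p.1 p.2

lemma lie_bigH_kronecker {n : ℕ} (H A B : NMat n) :
    ⁅bigH n H, A ⊗ₖ B⁆ = ⁅H, A⁆ ⊗ₖ B + A ⊗ₖ ⁅H, B⁆ := by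
  simp only [bigH, Ring.lie_def, Matrix.add_mul, Matrix.mul_add, ← Matrix.mul_kronecker_mul,
    Matrix.one_mul, Matrix.mul_one]
  ext i j
  simp only [Matrix.add_apply, Matrix.sub_apply, Matrix.kroneckerMap_apply]
  ring

section Lie

open Equiv (swap)
open scoped Pointwise

lemma cProdCoeff_lie_bigH {n : ℕ} {a b : Fin (2 * n)} (hab : a ⋖ b) (s t : Finset (Fin (2 * n)))
    (Q : NMat2 n) :
    cProdCoeff n s t ⁅bigH n (majorana n a * majorana n b), Q⁆
      = -2 * (exchangeSign a b s • cProdCoeff n (swap a b • s) t Q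
        + exchangeSign a b t • cProdCoeff n s (swap a b • t) Q) := by
  have lie_cProd (u : Finset (Fin (2 * n))) : ⁅majorana n a * majorana n b, cProd n u⁆
      = (2 * exchangeSign a b u) • cProd n (swap a b • u) :=
    cProd_eq_orderedProd n ▸ (isMajoranaFamily_majorana n).lie_mul_orderedProd hab u
  have sign_transport (x y : Finset (Fin (2 * n))) (p : Prop) [Decidable p] :
      exchangeSign a b y • (if swap a b • x = y ∧ p then 1 else 0 : ℂ)
        = -(exchangeSign a b x • (if swap a b • x = y ∧ p then 1 else 0 : ℂ)) := by
    split_ifs with h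
    · rw [← h.1, exchangeSign_swap_smul, neg_smul]
    · rw [smul_zero, smul_zero, neg_zero]
  let H := bigH n (majorana n a * majorana n b)
  have maps_eq : cProdCoeff n s t ∘ₗ (LinearMap.mulLeft ℂ H - LinearMap.mulRight ℂ H)
      = (-2 : ℂ) • (exchangeSign a b s • cProdCoeff n (swap a b • s) t
        + exchangeSign a b t • cProdCoeff n s (swap a b • t)) := by
    refine (cProdKroneckerBasis n).ext fun ⟨u, v⟩ => ?_
    rw [cProdKroneckerBasis_apply, LinearMap.comp_apply, LinearMap.sub_apply,
      LinearMap.mulLeft_apply, LinearMap.mulRight_apply, ← Ring.lie_def, lie_bigH_kronecker,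
      lie_cProd, lie_cProd, Matrix.smul_kronecker, Matrix.kronecker_smul]
    simp only [map_add, map_zsmul, cProdCoeff_kronecker, LinearMap.smul_apply, LinearMap.add_apply,
      ← swap_smul_eq_iff, and_comm (b := swap a b • t = v)]
    rw [mul_smul, mul_smul, sign_transport, sign_transport]
    module
  exact LinearMap.congr_fun maps_eq Q

end Lie

lemma bigH_smul {n : ℕ} (z : ℂ) (H : NMat n) : bigH n (z • H) = z • bigH n H := by
  rw [bigH, bigH, Matrix.smul_kronecker, Matrix.kronecker_smul, smul_add]

lemma mem_quadCommutant_iff_lie {n : ℕ} {Q : NMat2 n} :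
    Q ∈ quadCommutant n ↔
      ∀ a b : Fin (2 * n), a ⋖ b → ⁅bigH n (majorana n a * majorana n b), Q⁆ = 0 := by
  have lie_I_smul (H : NMat n) :
      ⁅bigH n (I • H), Q⁆ = 0 ↔ bigH n H * Q = Q * bigH n H := by
    rw [bigH_smul, Ring.lie_def, Matrix.smul_mul, Matrix.mul_smul, ← smul_sub,
      smul_eq_zero_iff_right I_ne_zero, sub_eq_zero]
  constructor
  · intro hQ a b hab
    have hab' : (a : ℕ) + 1 = b := Nat.covBy_iff_add_one_eq.mp (Fin.covBy_iff.mp hab)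
    obtain ⟨j, hj | hj⟩ := Nat.even_or_odd' (a : ℕ)
    · rw [majorana_mul_majorana_eq_pauliZ ⟨j, by omega⟩ hj (by simp only; omega), lie_I_smul]
      exact hQ _ (.inl ⟨_, rfl⟩)
    · rw [majorana_mul_majorana_eq_pauliXX ⟨j, by omega⟩ hj (by simp only; omega), lie_I_smul]
      exact hQ _ (.inr ⟨_, by simp only; omega, rfl⟩)
  · rintro hQ H (⟨j, rfl⟩ | ⟨j, hj, rfl⟩)
    · rw [← lie_I_smul, ← majorana_mul_majorana_eq_pauliZ (a := ⟨2 * j, by omega⟩)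
        (b := ⟨2 * j + 1, by omega⟩) j rfl rfl]
      exact hQ _ _ (Fin.covBy_iff.mpr (Nat.covBy_iff_add_one_eq.mpr rfl))
    · rw [← lie_I_smul, ← majorana_mul_majorana_eq_pauliXX (a := ⟨2 * j + 1, by omega⟩)
        (b := ⟨2 * j + 2, by omega⟩) j rfl rfl]
      exact hQ _ _ (Fin.covBy_iff.mpr (Nat.covBy_iff_add_one_eq.mpr rfl))

lemma mem_quadCommutant_iff_isExchangeInvariant {n : ℕ} {Q : NMat2 n} :
    Q ∈ quadCommutant n ↔ IsExchangeInvariant fun s t => cProdCoeff n s t Q := by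
  have lie_eq_zero_iff (a b : Fin (2 * n)) : ⁅bigH n (majorana n a * majorana n b), Q⁆ = 0 ↔
      ∀ s t, cProdCoeff n s t ⁅bigH n (majorana n a * majorana n b), Q⁆ = 0 :=
    ⟨fun h s t => by rw [h, map_zero], fun h => ext_cProdCoeff fun s t => by rw [h, map_zero]⟩
  rw [mem_quadCommutant_iff_lie]
  refine forall₂_congr fun a b => forall_congr' fun hab => ?_
  rw [lie_eq_zero_iff]
  refine forall₂_congr fun s t => ?_
  rw [cProdCoeff_lie_bigH hab, mul_eq_zero_iff_left (by norm_num)]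

end Coefficients

section QuadraticSymmetries

variable {n : ℕ}

lemma neg_one_pow_piSum (s : Finset (Fin (2 * n))) : (-1 : ℂ) ^ piSum n s = alternatingSign s := by
  simp [piSum, alternatingSign]

lemma Qnorm_ne_zero {κ : ℕ} (hκ : κ ≤ 2 * n) : Qnorm n κ ≠ 0 := by
  have choose_pos : 0 < (Nat.choose (2 * n) κ : ℝ) := by exact_mod_cast Nat.choose_pos hκ
  rw [Qnorm, ne_eq, inv_eq_zero, ← ne_eq, mul_ne_zero_iff, ofReal_ne_zero]
  exact ⟨pow_ne_zero n two_ne_zero, Real.sqrt_ne_zero'.mpr choose_pos⟩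

/-- The scalar prefactor `(d √C(2n,κ))⁻¹ (−i)^n i^{κ mod 2}` of `Q_κ^1`. -/
def Q1norm (n κ : ℕ) : ℂ := Qnorm n κ * (-I) ^ n * I ^ (κ % 2)

lemma Q1norm_ne_zero {κ : ℕ} (hκ : κ ≤ 2 * n) : Q1norm n κ ≠ 0 :=
  mul_ne_zero (mul_ne_zero (Qnorm_ne_zero hκ) (pow_ne_zero n (neg_ne_zero.mpr I_ne_zero)))
    (pow_ne_zero (κ % 2) I_ne_zero)

lemma cProdCoeff_Q0 (κ : ℕ) (s t : Finset (Fin (2 * n))) :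
    cProdCoeff n s t (Q0 n κ) = if t = s then (if s.card = κ then Qnorm n κ else 0) else 0 := by
  have coeff_eq_ite (u : Finset (Fin (2 * n))) : cProdCoeff n s t (cProd n u ⊗ₖ cProd n u)
      = if s = u then (if t = s then 1 else 0) else 0 := by
    rw [cProdCoeff_kronecker, ← ite_and]
    refine if_congr (and_congr_right fun h => by rw [h]) rfl rfl
  rw [Q0, map_smul, map_sum]
  simp only [coeff_eq_ite, Finset.sum_ite_eq, Finset.mem_powersetCard_univ]
  split_ifs <;> simp

lemma cProdCoeff_Q1 (κ : ℕ) (s t : Finset (Fin (2 * n))) :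
    cProdCoeff n s t (Q1 n κ)
      = if t = sᶜ then alternatingSign s • (if s.card = κ then Q1norm n κ else 0) else 0 := by
  have coeff_eq_ite (u : Finset (Fin (2 * n))) : cProdCoeff n s t (cProd n u ⊗ₖ cProd n uᶜ)
      = if s = u then (if t = sᶜ then 1 else 0) else 0 := by
    rw [cProdCoeff_kronecker, ← ite_and]
    refine if_congr (and_congr_right fun h => by rw [h]) rfl rfl
  rw [Q1, ← Q1norm, map_smul, map_sum]
  simp only [map_smul, coeff_eq_ite, smul_ite, smul_zero, Finset.sum_ite_eq,
    Finset.mem_powersetCard_univ, neg_one_pow_piSum]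
  split_ifs <;> simp [mul_comm]

lemma Q0_mem_quadCommutant (κ : ℕ) : Q0 n κ ∈ quadCommutant n := by
  simp only [mem_quadCommutant_iff_isExchangeInvariant, cProdCoeff_Q0]
  exact .diagonal fun k => if k = κ then Qnorm n κ else 0

lemma Q1_mem_quadCommutant (κ : ℕ) : Q1 n κ ∈ quadCommutant n := by
  simp only [mem_quadCommutant_iff_isExchangeInvariant, cProdCoeff_Q1]
  exact .antidiagonal fun k => if k = κ then Q1norm n κ else 0

/-- The quadratic symmetries `Q_κ^0` and `Q_κ^1`, `κ ≤ 2n`, as a single family. -/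
def quadSymmetry (n : ℕ) : Fin (2 * n + 1) ⊕ Fin (2 * n + 1) → NMat2 n :=
  Sum.elim (fun κ => Q0 n κ) (fun κ => Q1 n κ)

lemma range_quadSymmetry (n : ℕ) :
    Set.range (quadSymmetry n)
      = {M : NMat2 n | ∃ κ : ℕ, κ ≤ 2 * n ∧ (M = Q0 n κ ∨ M = Q1 n κ)} := by
  ext M
  constructor
  · rintro ⟨κ | κ, rfl⟩
    · exact ⟨κ, κ.is_le, .inl rfl⟩
    · exact ⟨κ, κ.is_le, .inr rfl⟩
  · rintro ⟨κ, hκ, rfl | rfl⟩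
    · exact ⟨.inl ⟨κ, Nat.lt_succ_of_le hκ⟩, rfl⟩
    · exact ⟨.inr ⟨κ, Nat.lt_succ_of_le hκ⟩, rfl⟩

lemma exists_eq_sum_of_mem_quadCommutant [NeZero n] {Q : NMat2 n} (hQ : Q ∈ quadCommutant n) :
    ∃ x y : ℕ → ℂ, Q = ∑ κ ∈ Finset.range (2 * n + 1), (x κ • Q0 n κ + y κ • Q1 n κ) := by
  obtain ⟨f, g, hfg⟩ :=
    (mem_quadCommutant_iff_isExchangeInvariant.mp hQ).exists_eq_diagonal_add_antidiagonal
  refine ⟨fun κ => f κ / Qnorm n κ, fun κ => g κ / Q1norm n κ, ext_cProdCoeff fun s t => ?_⟩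
  have hs : s.card ≤ 2 * n := by simpa using s.card_le_univ
  rw [hfg, map_sum]
  simp only [map_add, map_smul, cProdCoeff_Q0, cProdCoeff_Q1, smul_eq_mul, smul_ite, mul_ite,
    smul_zero, mul_zero, Finset.sum_add_distrib, Finset.sum_ite_irrel, Finset.sum_ite_eq,
    Finset.sum_const_zero, Finset.mem_range, Nat.lt_succ_of_le hs, if_true]
  rw [div_mul_cancel₀ _ (Qnorm_ne_zero hs), mul_smul_comm, div_mul_cancel₀ _ (Q1norm_ne_zero hs)]

lemma quadCommutant_eq_span_range [NeZero n] :
    quadCommutant n = Submodule.span ℂ (Set.range (quadSymmetry n)) := by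
  refine le_antisymm (fun Q hQ => ?_) (Submodule.span_le.mpr ?_)
  · obtain ⟨x, y, rfl⟩ := exists_eq_sum_of_mem_quadCommutant hQ
    refine sum_mem fun κ hκ => add_mem ?_ ?_
    · exact Submodule.smul_mem _ _ (Submodule.subset_span ⟨.inl ⟨κ, Finset.mem_range.mp hκ⟩, rfl⟩)
    · exact Submodule.smul_mem _ _ (Submodule.subset_span ⟨.inr ⟨κ, Finset.mem_range.mp hκ⟩, rfl⟩)
  · rintro _ ⟨κ | κ, rfl⟩
    · exact Q0_mem_quadCommutant κ
    · exact Q1_mem_quadCommutant κ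

lemma linearIndependent_quadSymmetry [NeZero n] : LinearIndependent ℂ (quadSymmetry n) := by
  have exists_card_eq (κ : Fin (2 * n + 1)) : ∃ s : Finset (Fin (2 * n)), s.card = κ := by
    obtain ⟨s, -, hs⟩ := Finset.exists_subset_card_eq (s := Finset.univ (α := Fin (2 * n)))
      (n := κ) (by simpa using κ.is_le)
    exact ⟨s, hs⟩
  choose S hS using exists_card_eq
  have coeff_ne_zero (κ : Fin (2 * n + 1)) : alternatingSign (S κ) • Q1norm n κ ≠ 0 :=
    smul_ne_zero (left_ne_zero_of_mul_eq_one (alternatingSign_mul_self _))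
      (Q1norm_ne_zero κ.is_le)
  refine LinearIndependent.of_pairwise_dual_eq_zero_one _
    (Sum.elim (fun κ => (Qnorm n κ)⁻¹ • cProdCoeff n (S κ) (S κ))
      fun κ => (alternatingSign (S κ) • Q1norm n κ)⁻¹ • cProdCoeff n (S κ) (S κ)ᶜ) ?_ ?_
  · rintro (κ | κ) (μ | μ) hne
    · have hκμ : (κ : ℕ) ≠ μ := fun h => hne (congrArg Sum.inl (Fin.ext h))
      simp [quadSymmetry, cProdCoeff_Q0, hS, hκμ]
    · simp [quadSymmetry, cProdCoeff_Q1]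
    · simp [quadSymmetry, cProdCoeff_Q0]
    · have hκμ : (κ : ℕ) ≠ μ := fun h => hne (congrArg Sum.inr (Fin.ext h))
      simp [quadSymmetry, cProdCoeff_Q1, hS, hκμ]
  · rintro (κ | κ)
    · simp [quadSymmetry, cProdCoeff_Q0, hS, Qnorm_ne_zero κ.is_le]
    · simpa [quadSymmetry, cProdCoeff_Q1, hS] using inv_mul_cancel₀ (coeff_ne_zero κ)

end QuadraticSymmetries

/-- Every operator commuting with `H ⊗ I + I ⊗ H` for all matchgate generators `H` lies in
the span of the `Q_κ^0, Q_κ^1`; consequently the commutant has dimension `4n + 2`. -/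
theorem quadCommutant_eq_span (n : ℕ) (hn : 1 ≤ n) :
    (∀ Q : NMat2 n, (∀ H ∈ matchgateGens n, bigH n H * Q = Q * bigH n H) →
      Q ∈ Submodule.span ℂ
        {M : NMat2 n | ∃ κ : ℕ, κ ≤ 2 * n ∧ (M = Q0 n κ ∨ M = Q1 n κ)})
    ∧ Module.finrank ℂ (quadCommutant n) = 4 * n + 2 := by
  have : NeZero n := ⟨Nat.one_le_iff_ne_zero.mp hn⟩
  rw [← range_quadSymmetry]
  constructor
  · intro Q hQ
    rw [← quadCommutant_eq_span_range]
    exact hQ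
  · rw [quadCommutant_eq_span_range, finrank_span_eq_card linearIndependent_quadSymmetry,
      Fintype.card_sum, Fintype.card_fin]
    ring

end
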